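/- For every n and d, the supremum of the Gaussian average sensitivity gas(f) over all degree-d polynomial threshold functions f : ℝⁿ → {−1,1} in n variables is at most the supremum of the average sensitivity as(g) over all degree-d polynomial threshold functions g : ℝⁿ → {−1,1} in n variables. Equivalently: for every degree-d polynomial threshold function f in n variables and every real s such that as(g) ≤ s for all degree-d polynomial threshold functions g in n variables, one has gas(f) ≤ s. -/

import Mathlib

open MeasureTheory ProbabilityTheory
open scoped ENNReal

/-- The standard Gaussian measure on `ℝⁿ`. -/
noncomputable def stdGaussian (n : ℕ) : Measure (Fin n → ℝ) :=
  Measure.pi fun _ => gaussianReal 0 1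

/-- The uniform (Bernoulli) measure on `{-1, 1}`. -/
noncomputable def bernoulliPM : Measure ℝ :=
  ((1 : ℝ≥0∞) / 2) • Measure.dirac (1 : ℝ) + ((1 : ℝ≥0∞) / 2) • Measure.dirac (-1 : ℝ)

/-- The uniform measure on `{-1, 1}ⁿ`. -/
noncomputable def bernoulliCube (n : ℕ) : Measure (Fin n → ℝ) :=
  Measure.pi fun _ => bernoulliPM

/-- The sign function, with value `1` at `0`. -/
noncomputable def psign (r : ℝ) : ℝ := if 0 ≤ r then 1 else -1

/-- The average sensitivity `as(f) = ∑ᵢ Pr_A(f(A) ≠ f(A⁽ⁱ⁾))`. -/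
noncomputable def avgSensitivity (n : ℕ) (f : (Fin n → ℝ) → ℝ) : ℝ :=
  ∑ i : Fin n,
    ((bernoulliCube n) {a | f a ≠ f (Function.update a i (-(a i)))}).toReal

/-- The Gaussian average sensitivity `gas(f) = ∑ᵢ Pr(f(X) ≠ f(X⁽ⁱ⁾))`. -/
noncomputable def gaussAvgSensitivity (n : ℕ) (f : (Fin n → ℝ) → ℝ) : ℝ :=
  ∑ i : Fin n,
    (((stdGaussian n).prod (gaussianReal 0 1))
      {xy | f xy.1 ≠ f (Function.update xy.1 i xy.2)}).toReal

/-!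
Let `X`, `Y` be independent samples of a product measure, and for a sign vector `a` let `Z a` have
`j`-th coordinate `X j` where `a j = 1` and `Y j` where `a j = -1`. For fixed signs, swapping `X j`
and `Y j` in the coordinates with `a j = -1` shows that `(Z a, Z (-a))` is distributed as `(X, Y)`,
and flipping the sign `a i` replaces `(Z a) i` by `(Z (-a)) i`. Hence the resampling sensitivity of
`f` is the expectation over `(X, Y)` of the average sensitivity of `a ↦ f (Z a)`. Since `Z a` is
affine in `a`, the latter is a polynomial threshold function of the same degree whenever `f` is.
-/

/-- The sensitivity `∑ᵢ Pr(f(X) ≠ f(X⁽ⁱ⁾))` of `f` under resampling one coordinate, where `X` has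
law `Measure.pi μ` and `X⁽ⁱ⁾` replaces `Xᵢ` by an independent sample of `μ i`. The Gaussian average
sensitivity is the case of standard Gaussian factors. -/
noncomputable def resamplingSensitivity {ι α β : Type*} [Fintype ι] [DecidableEq ι]
    [MeasurableSpace α] (μ : ι → Measure α) (f : (ι → α) → β) : ℝ :=
  ∑ i, ((Measure.pi μ).prod (μ i)).real {xy | f xy.1 ≠ f (Function.update xy.1 i xy.2)}

/-- The point whose `j`-th coordinate is `(u j).1` if `a j = 1` and `(u j).2` if `a j = -1`,
extended affinely to all real `a` so that composing a polynomial with it does not raise the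
degree. -/
noncomputable def signSelect {ι : Type*} (u : ι → ℝ × ℝ) (a : ι → ℝ) : ι → ℝ :=
  fun j => ((u j).1 + (u j).2) / 2 + ((u j).1 - (u j).2) / 2 * a j

instance : IsProbabilityMeasure bernoulliPM :=
  ⟨by simp [bernoulliPM, ENNReal.inv_two_add_inv_two]⟩

instance (n : ℕ) : IsProbabilityMeasure (bernoulliCube n) :=
  inferInstanceAs (IsProbabilityMeasure (Measure.pi _))

lemma ae_bernoulliPM_eq_one_or_eq_neg_one : ∀ᵐ ε ∂bernoulliPM, ε = 1 ∨ ε = -1 := by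
  simp [bernoulliPM, ae_iff]

lemma ae_bernoulliCube_eq_one_or_eq_neg_one (n : ℕ) :
    ∀ᵐ a ∂bernoulliCube n, ∀ j, a j = 1 ∨ a j = -1 :=
  ae_all_iff.2 fun _ => (measurePreserving_eval (fun _ => bernoulliPM) _).quasiMeasurePreserving.ae
    ae_bernoulliPM_eq_one_or_eq_neg_one

lemma avgSensitivity_nonneg (n : ℕ) (f : (Fin n → ℝ) → ℝ) : 0 ≤ avgSensitivity n f :=
  Finset.sum_nonneg fun _ _ => ENNReal.toReal_nonneg

lemma measurable_psign : Measurable psign :=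
  Measurable.ite measurableSet_Ici measurable_const measurable_const

section Polynomial

open MvPolynomial

lemma totalDegree_bind₁_le {σ τ R : Type*} [CommSemiring R] {k : ℕ}
    {g : σ → MvPolynomial τ R} (hg : ∀ j, (g j).totalDegree ≤ k) (p : MvPolynomial σ R) :
    (bind₁ g p).totalDegree ≤ p.totalDegree * k := by
  rw [← aeval_eq_bind₁, aeval_def, eval₂_eq, algebraMap_eq]
  refine totalDegree_finsetSum_le fun m hm => ?_
  calc (C (p.coeff m) * ∏ j ∈ m.support, g j ^ m j).totalDegree
      ≤ (∏ j ∈ m.support, g j ^ m j).totalDegree := by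
        simpa using totalDegree_mul (C (p.coeff m)) (∏ j ∈ m.support, g j ^ m j)
    _ ≤ ∑ j ∈ m.support, (g j ^ m j).totalDegree := totalDegree_finsetProd _ _
    _ ≤ ∑ j ∈ m.support, m j * k := by
        gcongr with j
        exact (totalDegree_pow _ _).trans (Nat.mul_le_mul_left _ (hg j))
    _ = (m.sum fun _ e => e) * k := by rw [Finsupp.sum, Finset.sum_mul]
    _ ≤ p.totalDegree * k := Nat.mul_le_mul_right _ (le_totalDegree hm)

lemma totalDegree_C_add_C_mul_X_le {σ R : Type*} [CommSemiring R] (b c : R) (j : σ) :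
    (C b + C c * X j : MvPolynomial σ R).totalDegree ≤ 1 := by
  rw [C_mul_X_eq_monomial]
  refine (totalDegree_add _ _).trans (max_le (by simp) ?_)
  exact (totalDegree_monomial_le _ _).trans (by simp)

lemma exists_totalDegree_le_eval_signSelect {ι : Type*} (p : MvPolynomial ι ℝ) (u : ι → ℝ × ℝ) :
    ∃ q : MvPolynomial ι ℝ, q.totalDegree ≤ p.totalDegree ∧
      ∀ a, eval a q = eval (signSelect u a) p := by
  refine ⟨bind₁ (fun j => C (((u j).1 + (u j).2) / 2) + C (((u j).1 - (u j).2) / 2) * X j) p,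
    ?_, fun a => ?_⟩
  · simpa using totalDegree_bind₁_le (fun j => totalDegree_C_add_C_mul_X_le _ _ j) p
  · unfold signSelect
    simp [← aeval_eq_eval, aeval_bind₁]

end Polynomial

section SignSelect

variable {ι : Type*}

lemma signSelect_update_neg [DecidableEq ι] (u : ι → ℝ × ℝ) (a : ι → ℝ) (i : ι) :
    signSelect u (Function.update a i (-a i)) =
      Function.update (signSelect u a) i (signSelect u (-a) i) := by
  ext j
  rcases eq_or_ne j i with rfl | hji
  · simp [signSelect]
  · simp [signSelect, hji]

variable [Fintype ι] (μ : ι → Measure ℝ) [∀ i, SigmaFinite (μ i)]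

lemma measurePreserving_signSelect_signSelect_neg {a : ι → ℝ} (ha : ∀ j, a j = 1 ∨ a j = -1) :
    MeasurePreserving (fun (u : ι → ℝ × ℝ) j => (signSelect u a j, signSelect u (-a) j))
      (Measure.pi fun j => (μ j).prod (μ j)) (Measure.pi fun j => (μ j).prod (μ j)) := by
  refine measurePreserving_pi _ _
    (f := fun j (v : ℝ × ℝ) => ((v.1 + v.2) / 2 + (v.1 - v.2) / 2 * a j,
      (v.1 + v.2) / 2 + (v.1 - v.2) / 2 * -a j)) fun j => ?_
  rcases ha j with h | h
  · convert MeasurePreserving.id ((μ j).prod (μ j)) using 1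
    ext v <;> simp only [h, id] <;> ring
  · convert Measure.measurePreserving_swap (μ := μ j) (ν := μ j) using 1
    ext v <;> simp only [h, Prod.fst_swap, Prod.snd_swap] <;> ring

end SignSelect

lemma measurePreserving_fst_snd_apply {ι α β : Type*} [Fintype ι] [MeasurableSpace α]
    [MeasurableSpace β] (μ : ι → Measure α) [∀ i, SigmaFinite (μ i)] (ν : ι → Measure β)
    [∀ i, IsProbabilityMeasure (ν i)] (i : ι) :
    MeasurePreserving (fun u : ι → α × β => (fun j => (u j).1, (u i).2))
      (Measure.pi fun j => (μ j).prod (ν j)) ((Measure.pi μ).prod (ν i)) :=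
  ((MeasurePreserving.id _).prod (measurePreserving_eval ν i)).comp
    (measurePreserving_arrowProdEquivProdArrow α β ι μ ν)

lemma measureReal_prod_eq_integral {α β : Type*} [MeasurableSpace α] [MeasurableSpace β]
    (μ : Measure α) (ν : Measure β) [IsFiniteMeasure ν] {s : Set (α × β)} (hs : MeasurableSet s) :
    (μ.prod ν).real s = ∫ x, ν.real (Prod.mk x ⁻¹' s) ∂μ := by
  rw [measureReal_def, Measure.prod_apply hs]
  exact (integral_toReal (measurable_measure_prodMk_left hs).aemeasurable
    (ae_of_all _ fun _ => measure_lt_top _ _)).symm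

section Resampling

variable {n : ℕ} (μ : Fin n → Measure ℝ) [∀ i, IsProbabilityMeasure (μ i)]

lemma measurePreserving_signSelect_bernoulliCube (i : Fin n) :
    MeasurePreserving
      (fun w : (Fin n → ℝ × ℝ) × (Fin n → ℝ) => (signSelect w.1 w.2, signSelect w.1 (-w.2) i))
      ((Measure.pi fun j => (μ j).prod (μ j)).prod (bernoulliCube n))
      ((Measure.pi μ).prod (μ i)) := by
  have hmeas : Measurable fun w : (Fin n → ℝ) × (Fin n → ℝ × ℝ) =>
      (signSelect w.2 w.1, signSelect w.2 (-w.1) i) := by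
    unfold signSelect
    fun_prop
  have hmap : ∀ᵐ a ∂bernoulliCube n, Measure.map
      (fun u : Fin n → ℝ × ℝ => (signSelect u a, signSelect u (-a) i))
      (Measure.pi fun j => (μ j).prod (μ j)) = (Measure.pi μ).prod (μ i) := by
    filter_upwards [ae_bernoulliCube_eq_one_or_eq_neg_one n] with a ha
    exact ((measurePreserving_fst_snd_apply μ μ i).comp
      (measurePreserving_signSelect_signSelect_neg μ ha)).map_eq
  exact measurePreserving_snd.comp
    (((MeasurePreserving.id _).skew_product hmeas hmap).comp Measure.measurePreserving_swap)

variable {μ}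

theorem resamplingSensitivity_eq_integral_avgSensitivity {f : (Fin n → ℝ) → ℝ}
    (hf : Measurable f) :
    resamplingSensitivity μ f = ∫ u, avgSensitivity n (fun a => f (signSelect u a))
      ∂Measure.pi fun j => (μ j).prod (μ j) := by
  set π := Measure.pi fun j => (μ j).prod (μ j)
  let sensitive (i : Fin n) : Set ((Fin n → ℝ) × ℝ) :=
    {xy | f xy.1 ≠ f (Function.update xy.1 i xy.2)}
  let sensitiveFlip (i : Fin n) : Set ((Fin n → ℝ × ℝ) × (Fin n → ℝ)) :=
    {w | f (signSelect w.1 w.2) ≠ f (signSelect w.1 (Function.update w.2 i (-w.2 i)))}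
  have measurableSet_sensitive (i) : MeasurableSet (sensitive i) :=
    (measurableSet_eq_fun (by fun_prop) (hf.comp measurable_update')).compl
  have preimage_sensitive (i) :
      (fun w => (signSelect w.1 w.2, signSelect w.1 (-w.2) i)) ⁻¹' sensitive i =
        sensitiveFlip i := by
    ext w
    simp [sensitive, sensitiveFlip, signSelect_update_neg]
  have measurableSet_sensitiveFlip (i) : MeasurableSet (sensitiveFlip i) := by
    rw [← preimage_sensitive]
    exact (measurePreserving_signSelect_bernoulliCube μ i).measurable (measurableSet_sensitive i)
  calc resamplingSensitivity μ f
      = ∑ i, (π.prod (bernoulliCube n)).real (sensitiveFlip i) := by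
        refine Finset.sum_congr rfl fun i _ => ?_
        rw [← preimage_sensitive]
        exact ((measurePreserving_signSelect_bernoulliCube μ i).measureReal_preimage
          (measurableSet_sensitive i).nullMeasurableSet).symm
    _ = ∑ i, ∫ u, (bernoulliCube n).real (Prod.mk u ⁻¹' sensitiveFlip i) ∂π :=
        Finset.sum_congr rfl fun i _ =>
          measureReal_prod_eq_integral _ _ (measurableSet_sensitiveFlip i)
    _ = ∫ u, avgSensitivity n (fun a => f (signSelect u a)) ∂π :=
        (integral_finsetSum _ fun i _ => Measure.integrable_measure_prodMk_left
          (measurableSet_sensitiveFlip i) (measure_ne_top _ _)).symm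

theorem resamplingSensitivity_le_of_forall_avgSensitivity_le {f : (Fin n → ℝ) → ℝ}
    (hf : Measurable f) {s : ℝ}
    (hs : ∀ u, avgSensitivity n (fun a => f (signSelect u a)) ≤ s) :
    resamplingSensitivity μ f ≤ s := by
  rw [resamplingSensitivity_eq_integral_avgSensitivity hf]
  exact (integral_mono_of_nonneg (ae_of_all _ fun _ => avgSensitivity_nonneg _ _)
    (integrable_const s) (ae_of_all _ hs)).trans_eq (by simp)

variable (μ)

theorem gas_le_max_as_general {φ : ℝ → ℝ} (hφ : Measurable φ) {d : ℕ}
    {p : MvPolynomial (Fin n) ℝ} (hp : p.totalDegree ≤ d) {s : ℝ}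
    (hs : ∀ q : MvPolynomial (Fin n) ℝ, q.totalDegree ≤ d →
      avgSensitivity n (fun x => φ (MvPolynomial.eval x q)) ≤ s) :
    resamplingSensitivity μ (fun x => φ (MvPolynomial.eval x p)) ≤ s := by
  have hφp : Measurable fun x => φ (MvPolynomial.eval x p) :=
    hφ.comp (MvPolynomial.continuous_eval p).measurable
  refine resamplingSensitivity_le_of_forall_avgSensitivity_le hφp fun u => ?_
  obtain ⟨q, hq, hq_eval⟩ := exists_totalDegree_le_eval_signSelect p u
  simpa only [hq_eval] using hs q (hq.trans hp)

end Resampling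

/-- The largest Gaussian average sensitivity of a degree-`d` PTF in `n` variables is at most
the largest average sensitivity of a degree-`d` PTF in `n` variables: if `as(g) ≤ s` for every
degree-`d` polynomial threshold function `g` in `n` variables, then `gas(f) ≤ s` for every
degree-`d` polynomial threshold function `f` in `n` variables. -/
theorem gas_le_max_as (n d : ℕ) (p : MvPolynomial (Fin n) ℝ) (hp : p.totalDegree ≤ d)
    (s : ℝ)
    (hs : ∀ q : MvPolynomial (Fin n) ℝ, q.totalDegree ≤ d →
      avgSensitivity n (fun x => psign (MvPolynomial.eval x q)) ≤ s) :
    gaussAvgSensitivity n (fun x => psign (MvPolynomial.eval x p)) ≤ s :=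
  gas_le_max_as_general (fun _ => gaussianReal 0 1) measurable_psign hp hs
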